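/- Let L > 0, let q_e : 𝕋_L → ℝ be smooth with q_e > 0, and fix C₀ > 0. There exist ε₀ ∈ (0,1) and C > 0, depending only on q_e, L, C₀, such that for all 0 < ε < ε₀ the following holds. Let ω₁, ω₂ ∈ [1/2, 2] and ω̄₁, ω̄₂ ∈ ℝ with ω_j² = 1 − ε ω̄_j and |ω̄_j| ≤ C₀, and let Q₁, Q₂ be smooth on 𝕋_L × [0,∞) with ‖Q_j‖_{X_{2,50}} ≤ ε^{0.99} for j = 1, 2. Define U_j := Q_j / (ω_j² q_e(s)² + Q_j). Then for every integer 0 ≤ m ≤ 50: Σ_{j=0}^{1} ‖⟨ψ⟩^m ∂_s^j(U₁ − U₂)‖_{L∞(𝕋_L×ℝ₊)} ≤ C( ‖Q₁ − Q₂‖_{X_{2,m}} + ε^{1.99} |ω̄₁ − ω̄₂| ) and Σ_{j=0}^{2} ‖⟨ψ⟩^m ∂_s^j(U₁ − U₂)‖_{L²(𝕋_L×ℝ₊)} ≤ C( ‖Q₁ − Q₂‖_{X_{2,m}} + ε^{1.99} |ω̄₁ − ω̄₂| ). -/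

import Mathlib

open MeasureTheory Set Function Filter

/-- `k`-th partial derivative in the tangential variable `s` of a function on
`𝕋_L × [0,∞)` (represented as a curried function `ℝ → ℝ → ℝ`). -/
noncomputable def dS (k : ℕ) (h : ℝ → ℝ → ℝ) : ℝ → ℝ → ℝ :=
  fun s ψ => iteratedDeriv k (fun s' => h s' ψ) s

/-- `j`-th partial derivative in the normal (von Mises) variable `ψ`. -/
noncomputable def dPsi (j : ℕ) (h : ℝ → ℝ → ℝ) : ℝ → ℝ → ℝ :=
  fun s ψ => iteratedDeriv j (fun ψ' => h s ψ') ψ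

/-- Squared `L²` norm over `𝕋_L × ℝ₊` (fundamental domain `(0,L] × (0,∞)`). -/
noncomputable def L2sq (L : ℝ) (h : ℝ → ℝ → ℝ) : ℝ :=
  ∫ p in Ioc (0:ℝ) L ×ˢ Ioi (0:ℝ), (h p.1 p.2) ^ 2

/-- Square-integrability over `𝕋_L × ℝ₊`. -/
def FiniteL2 (L : ℝ) (h : ℝ → ℝ → ℝ) : Prop :=
  IntegrableOn (fun p : ℝ × ℝ => (h p.1 p.2) ^ 2) (Ioc (0:ℝ) L ×ˢ Ioi (0:ℝ))

/-- The weight `⟨ψ⟩^m h`. -/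
noncomputable def wt (m : ℕ) (h : ℝ → ℝ → ℝ) : ℝ → ℝ → ℝ :=
  fun s ψ => (1 + ψ) ^ m * h s ψ

/-- Squared `X_{k,m}` norm:
`‖h‖²_{X_{k,m}} = Σ_{k'≤k} Σ_{m'≤m} (‖⟨ψ⟩^{m'}∂_s^{k'}h‖² + ‖⟨ψ⟩^{m'}∂_s^{k'+1}h‖²
+ ‖⟨ψ⟩^{m'}∂_ψ∂_s^{k'}h‖² + ‖⟨ψ⟩^{m'}∂_ψ²∂_s^{k'}h‖²)`. -/
noncomputable def XnormSq (L : ℝ) (k m : ℕ) (h : ℝ → ℝ → ℝ) : ℝ :=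
  ∑ k' ∈ Finset.range (k+1), ∑ m' ∈ Finset.range (m+1),
    (L2sq L (wt m' (dS k' h)) + L2sq L (wt m' (dS (k'+1) h))
      + L2sq L (wt m' (dPsi 1 (dS k' h))) + L2sq L (wt m' (dPsi 2 (dS k' h))))

/-- The `X_{k,m}` norm. -/
noncomputable def Xnorm (L : ℝ) (k m : ℕ) (h : ℝ → ℝ → ℝ) : ℝ :=
  Real.sqrt (XnormSq L k m h)

/-- Membership in the space `X_{k,m}`: all the defining integrands are integrable. -/
def XFinite (L : ℝ) (k m : ℕ) (h : ℝ → ℝ → ℝ) : Prop :=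
  ∀ k' ≤ k, ∀ m' ≤ m,
    FiniteL2 L (wt m' (dS k' h)) ∧ FiniteL2 L (wt m' (dS (k'+1) h))
      ∧ FiniteL2 L (wt m' (dPsi 1 (dS k' h))) ∧ FiniteL2 L (wt m' (dPsi 2 (dS k' h)))

/-- Joint smoothness of a curried function of two real variables. -/
def Smooth2 (h : ℝ → ℝ → ℝ) : Prop :=
  ContDiff ℝ (⊤ : ℕ∞) (fun p : ℝ × ℝ => h p.1 p.2)

/-- Periodicity in the first (tangential) variable. -/
def PeriodicS (L : ℝ) (h : ℝ → ℝ → ℝ) : Prop :=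
  ∀ ψ : ℝ, Function.Periodic (fun s => h s ψ) L

/-- Squared `H^n` norm of a function on `𝕋_L`. -/
noncomputable def HnormSq (L : ℝ) (n : ℕ) (b : ℝ → ℝ) : ℝ :=
  ∑ j ∈ Finset.range (n+1), ∫ s in (0:ℝ)..L, (iteratedDeriv j b s) ^ 2

/-!
Over the common denominator, `U₁ - U₂ = q G / (D₁ D₂)` with `q = q_e²`, `α = ω₁²`, `β = ω₂²`,
`D₁ = α q + Q₁`, `D₂ = β q + Q₂` and `G = β Q₁ - α Q₂ = β (Q₁ - Q₂) + (β - α) Q₂`. The second form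
of `G` yields the right-hand side of the estimates, because `|α - β| = ε |ωbar₁ - ωbar₂|`.

By the Sobolev embedding, `Q_j` and `∂_s Q_j` are uniformly small, so that `D_j` is bounded below
and its first derivative is bounded, whereas `∂_s² Q_j` is controlled only in `L²`. In the second
derivative of `q G / (D₁ D₂)` it multiplies nothing but `G` itself, which the same embedding bounds
in weighted `L^∞`.
-/

/-! ### Partial derivatives of smooth functions of two variables -/

section PartialDerivatives

variable {f g h : ℝ → ℝ → ℝ}

lemma Smooth2.continuous (hh : Smooth2 h) : Continuous fun p : ℝ × ℝ => h p.1 p.2 :=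
  ContDiff.continuous hh

lemma Smooth2.swap (hh : Smooth2 h) : Smooth2 fun s ψ => h ψ s :=
  ContDiff.comp (g := fun p : ℝ × ℝ => h p.1 p.2) hh (contDiff_snd.prodMk contDiff_fst)

lemma Smooth2.contDiff_left (hh : Smooth2 h) (ψ : ℝ) (n : ℕ) : ContDiff ℝ n fun s => h s ψ :=
  (ContDiff.comp (g := fun p : ℝ × ℝ => h p.1 p.2) hh (contDiff_id.prodMk contDiff_const)).of_le
    (mod_cast le_top)

lemma Smooth2.contDiff_right (hh : Smooth2 h) (s : ℝ) (n : ℕ) : ContDiff ℝ n (h s) :=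
  hh.swap.contDiff_left s n

lemma dS_zero (h : ℝ → ℝ → ℝ) : dS 0 h = h := by
  funext s ψ
  simp only [dS, iteratedDeriv_zero]

lemma dS_succ (k : ℕ) (h : ℝ → ℝ → ℝ) : dS (k + 1) h = dS 1 (dS k h) := by
  funext s ψ
  simp only [dS, iteratedDeriv_succ, iteratedDeriv_zero]

lemma Smooth2.dS_one_eq_fderiv (hh : Smooth2 h) (s ψ : ℝ) :
    dS 1 h s ψ = fderiv ℝ (fun p : ℝ × ℝ => h p.1 p.2) (s, ψ) (1, 0) := by
  have hline : HasDerivAt (fun s' : ℝ => (s', ψ)) ((1 : ℝ), (0 : ℝ)) s :=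
    (hasDerivAt_id s).prodMk (hasDerivAt_const s ψ)
  have hfderiv := (ContDiff.differentiable hh (by simp) (s, ψ)).hasFDerivAt
  rw [_root_.dS, iteratedDeriv_one]
  exact (hfderiv.comp_hasDerivAt s hline).deriv

lemma Smooth2.dS (hh : Smooth2 h) (k : ℕ) : Smooth2 (dS k h) := by
  induction k with
  | zero => rwa [dS_zero]
  | succ k ih =>
    rw [dS_succ, Smooth2, funext fun p : ℝ × ℝ => ih.dS_one_eq_fderiv p.1 p.2]
    exact (ContDiff.fderiv_right ih (by simp)).clm_apply contDiff_const

lemma Smooth2.dPsi (hh : Smooth2 h) (j : ℕ) : Smooth2 (dPsi j h) :=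
  (hh.swap.dS j).swap

lemma Smooth2.wt (hh : Smooth2 h) (m : ℕ) : Smooth2 (wt m h) :=
  ContDiff.mul ((contDiff_const.add contDiff_snd).pow m) hh

lemma Smooth2.add (hf : Smooth2 f) (hg : Smooth2 g) : Smooth2 (f + g) := ContDiff.add hf hg

lemma Smooth2.const_smul (hh : Smooth2 h) (c : ℝ) : Smooth2 (c • h) := ContDiff.const_smul c hh

lemma dS_add (hf : Smooth2 f) (hg : Smooth2 g) (k : ℕ) : dS k (f + g) = dS k f + dS k g := by
  funext s ψ
  exact iteratedDeriv_add (hf.contDiff_left ψ k).contDiffAt (hg.contDiff_left ψ k).contDiffAt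

lemma dPsi_add (hf : Smooth2 f) (hg : Smooth2 g) (j : ℕ) :
    dPsi j (f + g) = dPsi j f + dPsi j g := by
  funext s ψ
  exact congrFun (congrFun (dS_add hf.swap hg.swap j) ψ) s

lemma dS_smul (k : ℕ) (c : ℝ) (h : ℝ → ℝ → ℝ) : dS k (c • h) = c • dS k h := by
  funext s ψ
  exact iteratedDeriv_const_smul_field c fun s' => h s' ψ

lemma dPsi_smul (j : ℕ) (c : ℝ) (h : ℝ → ℝ → ℝ) : dPsi j (c • h) = c • dPsi j h := by
  funext s ψ
  exact iteratedDeriv_const_smul_field c (h s)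

lemma wt_zero (h : ℝ → ℝ → ℝ) : wt 0 h = h := by
  funext s ψ
  simp only [wt, pow_zero, one_mul]

lemma wt_add (m : ℕ) (f g : ℝ → ℝ → ℝ) : wt m (f + g) = wt m f + wt m g := by
  funext s ψ
  exact mul_add _ _ _

lemma wt_smul (m : ℕ) (c : ℝ) (h : ℝ → ℝ → ℝ) : wt m (c • h) = c • wt m h := by
  funext s ψ
  exact mul_left_comm _ _ _

lemma abs_wt {ψ : ℝ} (hψ : 0 ≤ ψ) (m : ℕ) (h : ℝ → ℝ → ℝ) (s : ℝ) :
    |wt m h s ψ| = (1 + ψ) ^ m * |h s ψ| := by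
  rw [wt, abs_mul, abs_of_nonneg (by positivity)]

lemma periodic_iteratedDeriv {f : ℝ → ℝ} {L : ℝ} (hf : Periodic f L) (k : ℕ) :
    Periodic (iteratedDeriv k f) L := fun s => by
  have hshift := congrFun (iteratedDeriv_comp_add_const k f L) s
  rwa [hf.funext, eq_comm] at hshift

lemma PeriodicS.dS {L : ℝ} (hh : PeriodicS L h) (k : ℕ) : PeriodicS L (dS k h) :=
  fun ψ => periodic_iteratedDeriv (hh ψ) k

end PartialDerivatives

/-! ### Square integrability and the spaces `X_{k,m}` -/

section SquareIntegrable

variable {ι : Type*} {t : Finset ι} {L : ℝ} {u f g : ℝ → ℝ → ℝ} {F : ι → ℝ → ℝ → ℝ}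

lemma L2sq_nonneg (L : ℝ) (h : ℝ → ℝ → ℝ) : 0 ≤ L2sq L h :=
  integral_nonneg fun _ => sq_nonneg _

lemma L2sq_smul (L c : ℝ) (h : ℝ → ℝ → ℝ) : L2sq L (c • h) = c ^ 2 * L2sq L h := by
  simp only [L2sq, Pi.smul_apply, smul_eq_mul, mul_pow, integral_const_mul]

lemma FiniteL2.const_smul (hf : FiniteL2 L f) (c : ℝ) : FiniteL2 L (c • f) := by
  simp only [FiniteL2, Pi.smul_apply, smul_eq_mul, mul_pow]
  exact Integrable.const_mul hf (c ^ 2)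

lemma sq_le_card_mul_sum_sq_of_abs_le_sum {x : ℝ} {y : ι → ℝ} (hx : |x| ≤ ∑ i ∈ t, |y i|) :
    x ^ 2 ≤ t.card * ∑ i ∈ t, y i ^ 2 := by
  calc x ^ 2 = |x| ^ 2 := (sq_abs x).symm
    _ ≤ (∑ i ∈ t, |y i|) ^ 2 := by gcongr
    _ ≤ t.card * ∑ i ∈ t, |y i| ^ 2 := sq_sum_le_card_mul_sum_sq
    _ = t.card * ∑ i ∈ t, y i ^ 2 := by simp only [sq_abs]

lemma integrableOn_sum_sq (hF : ∀ i ∈ t, FiniteL2 L (F i)) :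
    IntegrableOn (fun p : ℝ × ℝ => t.card * ∑ i ∈ t, F i p.1 p.2 ^ 2)
      (Ioc (0 : ℝ) L ×ˢ Ioi (0 : ℝ)) :=
  (integrable_finsetSum t hF).const_mul _

lemma ae_sq_le_of_abs_le_sum (hu : ∀ s, ∀ ψ > 0, |u s ψ| ≤ ∑ i ∈ t, |F i s ψ|) :
    ∀ᵐ p : ℝ × ℝ ∂volume.restrict (Ioc (0 : ℝ) L ×ˢ Ioi (0 : ℝ)),
      u p.1 p.2 ^ 2 ≤ t.card * ∑ i ∈ t, F i p.1 p.2 ^ 2 :=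
  ae_restrict_of_forall_mem (measurableSet_Ioc.prod measurableSet_Ioi) fun p hp =>
    sq_le_card_mul_sum_sq_of_abs_le_sum (hu p.1 p.2 hp.2)

lemma FiniteL2.of_abs_le_sum (hF : ∀ i ∈ t, FiniteL2 L (F i))
    (hu_cont : Continuous fun p : ℝ × ℝ => u p.1 p.2)
    (hu : ∀ s, ∀ ψ > 0, |u s ψ| ≤ ∑ i ∈ t, |F i s ψ|) : FiniteL2 L u := by
  refine Integrable.mono' (integrableOn_sum_sq hF) (hu_cont.pow 2).aestronglyMeasurable ?_
  simpa only [norm_pow, Real.norm_eq_abs, sq_abs] using ae_sq_le_of_abs_le_sum hu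

lemma L2sq_le_card_mul_sum (hF : ∀ i ∈ t, FiniteL2 L (F i))
    (hu : ∀ s, ∀ ψ > 0, |u s ψ| ≤ ∑ i ∈ t, |F i s ψ|) :
    L2sq L u ≤ t.card * ∑ i ∈ t, L2sq L (F i) := by
  simp only [L2sq]
  rw [← integral_finsetSum t hF, ← integral_const_mul]
  exact integral_mono_of_nonneg (.of_forall fun _ => sq_nonneg _) (integrableOn_sum_sq hF)
    (ae_sq_le_of_abs_le_sum hu)

lemma FiniteL2.of_abs_le_add (hf : FiniteL2 L f) (hg : FiniteL2 L g)
    (hu_cont : Continuous fun p : ℝ × ℝ => u p.1 p.2)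
    (hu : ∀ s, ∀ ψ > 0, |u s ψ| ≤ |f s ψ| + |g s ψ|) : FiniteL2 L u :=
  FiniteL2.of_abs_le_sum (t := Finset.univ) (F := ![f, g])
    (by simp [Fin.forall_fin_two, hf, hg]) hu_cont (by simpa [Fin.sum_univ_two] using hu)

lemma L2sq_le_two_mul_add (hf : FiniteL2 L f) (hg : FiniteL2 L g)
    (hu : ∀ s, ∀ ψ > 0, |u s ψ| ≤ |f s ψ| + |g s ψ|) :
    L2sq L u ≤ 2 * (L2sq L f + L2sq L g) := by
  simpa [Fin.sum_univ_two] using L2sq_le_card_mul_sum (t := Finset.univ) (F := ![f, g])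
    (by simp [Fin.forall_fin_two, hf, hg]) (by simpa [Fin.sum_univ_two] using hu)

lemma FiniteL2.add (hf : FiniteL2 L f) (hg : FiniteL2 L g) (sf : Smooth2 f) (sg : Smooth2 g) :
    FiniteL2 L (f + g) :=
  hf.of_abs_le_add hg (sf.add sg).continuous fun _ _ _ => abs_add_le _ _

lemma L2sq_add_le (hf : FiniteL2 L f) (hg : FiniteL2 L g) :
    L2sq L (f + g) ≤ 2 * (L2sq L f + L2sq L g) :=
  L2sq_le_two_mul_add hf hg fun _ _ _ => abs_add_le _ _

end SquareIntegrable

section XSpace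

variable {L : ℝ} {k m : ℕ} {f g h : ℝ → ℝ → ℝ}

/-- The `(k, m)` summand of the squared norm of `X_{k',m'}`, `k ≤ k'`, `m ≤ m'`. -/
noncomputable def XnormSqTerm (L : ℝ) (k m : ℕ) (h : ℝ → ℝ → ℝ) : ℝ :=
  L2sq L (wt m (dS k h)) + L2sq L (wt m (dS (k + 1) h))
    + L2sq L (wt m (dPsi 1 (dS k h))) + L2sq L (wt m (dPsi 2 (dS k h)))

lemma XnormSqTerm_nonneg (L : ℝ) (k m : ℕ) (h : ℝ → ℝ → ℝ) : 0 ≤ XnormSqTerm L k m h :=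
  add_nonneg (add_nonneg (add_nonneg (L2sq_nonneg _ _) (L2sq_nonneg _ _)) (L2sq_nonneg _ _))
    (L2sq_nonneg _ _)

lemma XnormSq_eq_sum (L : ℝ) (k m : ℕ) (h : ℝ → ℝ → ℝ) : XnormSq L k m h =
    ∑ k' ∈ Finset.range (k + 1), ∑ m' ∈ Finset.range (m + 1), XnormSqTerm L k' m' h := rfl

lemma Xnorm_nonneg (L : ℝ) (k m : ℕ) (h : ℝ → ℝ → ℝ) : 0 ≤ Xnorm L k m h := Real.sqrt_nonneg _

lemma XnormSq_nonneg (L : ℝ) (k m : ℕ) (h : ℝ → ℝ → ℝ) : 0 ≤ XnormSq L k m h :=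
  Finset.sum_nonneg fun _ _ => Finset.sum_nonneg fun _ _ => XnormSqTerm_nonneg _ _ _ _

lemma Xnorm_sq (L : ℝ) (k m : ℕ) (h : ℝ → ℝ → ℝ) : Xnorm L k m h ^ 2 = XnormSq L k m h :=
  Real.sq_sqrt (XnormSq_nonneg L k m h)

lemma XnormSqTerm_le_Xnorm_sq (h : ℝ → ℝ → ℝ) {k' m' : ℕ} (hk : k' ≤ k) (hm : m' ≤ m) :
    XnormSqTerm L k' m' h ≤ Xnorm L k m h ^ 2 := by
  rw [Xnorm_sq, XnormSq_eq_sum]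
  calc XnormSqTerm L k' m' h
      ≤ ∑ m' ∈ Finset.range (m + 1), XnormSqTerm L k' m' h :=
        Finset.single_le_sum (f := fun m' => XnormSqTerm L k' m' h)
          (fun _ _ => XnormSqTerm_nonneg _ _ _ _) (Finset.mem_range_succ_iff.2 hm)
    _ ≤ _ := Finset.single_le_sum
        (f := fun k' => ∑ m' ∈ Finset.range (m + 1), XnormSqTerm L k' m' h)
        (fun _ _ => Finset.sum_nonneg fun _ _ => XnormSqTerm_nonneg _ _ _ _)
        (Finset.mem_range_succ_iff.2 hk)

lemma L2sq_wt_dS_le_Xnorm_sq (h : ℝ → ℝ → ℝ) {k' m' : ℕ} (hk : k' ≤ k) (hm : m' ≤ m) :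
    L2sq L (wt m' (dS k' h)) ≤ Xnorm L k m h ^ 2 := by
  refine le_trans ?_ (XnormSqTerm_le_Xnorm_sq h hk hm)
  simp only [XnormSqTerm, add_assoc]
  exact le_add_of_nonneg_right
    (add_nonneg (L2sq_nonneg _ _) (add_nonneg (L2sq_nonneg _ _) (L2sq_nonneg _ _)))

lemma Xnorm_mono_right (L : ℝ) (k : ℕ) (h : ℝ → ℝ → ℝ) : Monotone fun m => Xnorm L k m h :=
  fun _ _ hm => Real.sqrt_le_sqrt <| Finset.sum_le_sum fun _ _ =>
    Finset.sum_le_sum_of_subset_of_nonneg (Finset.range_mono (Nat.succ_le_succ hm))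
      fun _ _ _ => XnormSqTerm_nonneg _ _ _ _

lemma XFinite.mono_right {m' : ℕ} (hh : XFinite L k m' h) (hm : m ≤ m') : XFinite L k m h :=
  fun k' hk n hn => hh k' hk n (hn.trans hm)

lemma Xnorm_smul (L : ℝ) (k m : ℕ) (c : ℝ) (h : ℝ → ℝ → ℝ) :
    Xnorm L k m (c • h) = |c| * Xnorm L k m h := by
  have hterm (k' m' : ℕ) : XnormSqTerm L k' m' (c • h) = c ^ 2 * XnormSqTerm L k' m' h := by
    simp only [XnormSqTerm, dS_smul, dPsi_smul, wt_smul, L2sq_smul, mul_add]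
  rw [Xnorm, Xnorm, XnormSq_eq_sum, XnormSq_eq_sum]
  simp only [hterm, ← Finset.mul_sum]
  rw [Real.sqrt_mul (sq_nonneg c), Real.sqrt_sq_eq_abs]

lemma XFinite.const_smul (hh : XFinite L k m h) (c : ℝ) : XFinite L k m (c • h) := by
  intro k' hk m' hm
  obtain ⟨h₀, h₁, h₂, h₃⟩ := hh k' hk m' hm
  simp only [dS_smul, dPsi_smul, wt_smul]
  exact ⟨h₀.const_smul c, h₁.const_smul c, h₂.const_smul c, h₃.const_smul c⟩

lemma XFinite.add (hf : XFinite L k m f) (hg : XFinite L k m g) (sf : Smooth2 f)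
    (sg : Smooth2 g) : XFinite L k m (f + g) := by
  intro k' hk m' hm
  obtain ⟨f₀, f₁, f₂, f₃⟩ := hf k' hk m' hm
  obtain ⟨g₀, g₁, g₂, g₃⟩ := hg k' hk m' hm
  simp only [dS_add sf sg, dPsi_add (sf.dS k') (sg.dS k'), wt_add]
  exact ⟨f₀.add g₀ ((sf.dS _).wt _) ((sg.dS _).wt _), f₁.add g₁ ((sf.dS _).wt _) ((sg.dS _).wt _),
    f₂.add g₂ (((sf.dS _).dPsi _).wt _) (((sg.dS _).dPsi _).wt _),
    f₃.add g₃ (((sf.dS _).dPsi _).wt _) (((sg.dS _).dPsi _).wt _)⟩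

/-- The space of smooth functions on `𝕋_L × [0,∞)` of finite `X_{k,m}` norm; a function on the
half cylinder is represented by an `s`-periodic function on the whole plane. -/
def smoothX (L : ℝ) (k m : ℕ) : Submodule ℝ (ℝ → ℝ → ℝ) where
  carrier := {h | Smooth2 h ∧ PeriodicS L h ∧ XFinite L k m h}
  add_mem' hf hg := ⟨hf.1.add hg.1, fun ψ => (hf.2.1 ψ).add (hg.2.1 ψ),
    hf.2.2.add hg.2.2 hf.1 hg.1⟩
  zero_mem' := ⟨contDiff_const, fun _ _ => rfl, fun k' _ m' _ => by
    simp [FiniteL2, wt, dS, dPsi]⟩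
  smul_mem' c _ hh := ⟨hh.1.const_smul c, fun ψ s => congrArg (c * ·) (hh.2.1 ψ s),
    hh.2.2.const_smul c⟩

lemma Xnorm_add_le (hf : f ∈ smoothX L k m) (hg : g ∈ smoothX L k m) :
    Xnorm L k m (f + g) ≤ 2 * (Xnorm L k m f + Xnorm L k m g) := by
  have hterm : ∀ k' ≤ k, ∀ m' ≤ m,
      XnormSqTerm L k' m' (f + g) ≤ 2 * (XnormSqTerm L k' m' f + XnormSqTerm L k' m' g) := by
    intro k' hk m' hm
    obtain ⟨f₀, f₁, f₂, f₃⟩ := hf.2.2 k' hk m' hm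
    obtain ⟨g₀, g₁, g₂, g₃⟩ := hg.2.2 k' hk m' hm
    simp only [XnormSqTerm, dS_add hf.1 hg.1, dPsi_add (hf.1.dS k') (hg.1.dS k'), wt_add]
    linarith [L2sq_add_le f₀ g₀, L2sq_add_le f₁ g₁, L2sq_add_le f₂ g₂, L2sq_add_le f₃ g₃]
  have hsq : XnormSq L k m (f + g) ≤ 2 * (XnormSq L k m f + XnormSq L k m g) := by
    simp only [XnormSq_eq_sum, ← Finset.sum_add_distrib, Finset.mul_sum]
    gcongr with k' hk m' hm
    exact hterm k' (Finset.mem_range_succ_iff.1 hk) m' (Finset.mem_range_succ_iff.1 hm)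
  have hf₀ := Xnorm_nonneg L k m f
  have hg₀ := Xnorm_nonneg L k m g
  refine Real.sqrt_le_iff.2 ⟨by positivity, hsq.trans ?_⟩
  rw [← Xnorm_sq, ← Xnorm_sq]
  linarith [mul_nonneg hf₀ hg₀, sq_nonneg (Xnorm L k m f), sq_nonneg (Xnorm L k m g),
    add_sq (Xnorm L k m f) (Xnorm L k m g),
    mul_pow 2 (Xnorm L k m f + Xnorm L k m g) 2]

end XSpace

/-! ### Sobolev embedding -/

section Sobolev

lemma sq_le_sq_add_integral {f : ℝ → ℝ} (hf : ContDiff ℝ 1 f) {a b x y : ℝ}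
    (hx : x ∈ Icc a b) (hy : y ∈ Icc a b) :
    f x ^ 2 ≤ f y ^ 2 + ∫ t in a..b, (f t ^ 2 + deriv f t ^ 2) := by
  have hf_cont : Continuous f := hf.continuous
  have : Continuous (deriv f) := hf.continuous_deriv_one
  have hab : a ≤ b := hx.1.trans hx.2
  have hFTC : ∫ t in y..x, 2 * f t * deriv f t = f x ^ 2 - f y ^ 2 := by
    refine intervalIntegral.integral_eq_sub_of_hasDerivAt (f := fun t => f t ^ 2) (fun t _ => ?_)
      (Continuous.intervalIntegrable (by fun_prop) _ _)
    simpa using ((hf.differentiable one_ne_zero) t).hasDerivAt.fun_pow 2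
  have hAMGM (t : ℝ) : ‖2 * f t * deriv f t‖ ≤ f t ^ 2 + deriv f t ^ 2 :=
    abs_le.2 ⟨by linarith [sq_nonneg (f t + deriv f t), add_sq (f t) (deriv f t)],
      two_mul_le_add_sq _ _⟩
  have hbound : |∫ t in y..x, 2 * f t * deriv f t| ≤ ∫ t in a..b, (f t ^ 2 + deriv f t ^ 2) :=
    calc |∫ t in y..x, 2 * f t * deriv f t|
        ≤ |∫ t in y..x, (f t ^ 2 + deriv f t ^ 2)| :=
          intervalIntegral.norm_integral_le_abs_of_norm_le (.of_forall hAMGM)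
            (Continuous.intervalIntegrable (by fun_prop) _ _)
      _ ≤ |∫ t in a..b, (f t ^ 2 + deriv f t ^ 2)| :=
          intervalIntegral.abs_integral_mono_interval
            (by rw [uIoc_of_le hab]; exact Ioc_subset_Ioc (le_min hy.1 hx.1) (max_le hy.2 hx.2))
            (.of_forall fun t => by positivity)
            (Continuous.intervalIntegrable (by fun_prop) _ _)
      _ = ∫ t in a..b, (f t ^ 2 + deriv f t ^ 2) :=
          abs_of_nonneg (intervalIntegral.integral_nonneg hab fun t _ => by positivity)
  linarith [(abs_le.1 (hFTC ▸ hbound)).2]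

lemma sq_le_mul_integral_sq_add_deriv_sq {f : ℝ → ℝ} (hf : ContDiff ℝ 1 f) {a b x : ℝ}
    (hab : a < b) (hx : x ∈ Icc a b) :
    f x ^ 2 ≤ (1 / (b - a) + 1) * ∫ t in a..b, (f t ^ 2 + deriv f t ^ 2) := by
  have hf_cont : Continuous f := hf.continuous
  have : Continuous (deriv f) := hf.continuous_deriv_one
  set I := ∫ t in a..b, (f t ^ 2 + deriv f t ^ 2)
  have hmean : (b - a) * f x ^ 2 ≤ I + (b - a) * I :=
    calc (b - a) * f x ^ 2 = ∫ _ in a..b, f x ^ 2 := by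
          rw [intervalIntegral.integral_const, smul_eq_mul]
      _ ≤ ∫ y in a..b, ((f y ^ 2 + deriv f y ^ 2) + I) := by
          refine intervalIntegral.integral_mono_on hab.le (by simp)
            (Continuous.intervalIntegrable (by fun_prop) _ _) fun y hy => ?_
          linarith [sq_le_sq_add_integral hf hx hy, sq_nonneg (deriv f y)]
      _ = I + (b - a) * I := by
          rw [intervalIntegral.integral_add (Continuous.intervalIntegrable (by fun_prop) _ _)
            (by simp), intervalIntegral.integral_const, smul_eq_mul]
  have hba : 0 < b - a := sub_pos.2 hab
  calc f x ^ 2 ≤ (I + (b - a) * I) / (b - a) := by rwa [le_div_iff₀' hba]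
    _ = (1 / (b - a) + 1) * I := by field_simp

variable {L : ℝ} {k m : ℕ} {g h : ℝ → ℝ → ℝ}

lemma wt_sq_le_integral_strip (hg : Smooth2 g) (m : ℕ) (s : ℝ) {ψ : ℝ} (hψ : 0 ≤ ψ) :
    wt m g s ψ ^ 2 ≤
      2 * ∫ t in Ioc ψ (ψ + 1), (wt m g s t ^ 2 + wt m (dPsi 1 g) s t ^ 2) := by
  have hsob := sq_le_mul_integral_sq_add_deriv_sq (hg.contDiff_right s 1) (lt_add_one ψ)
    (left_mem_Icc.2 (le_add_of_nonneg_right zero_le_one))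
  have hcont : Continuous (g s) := (hg.contDiff_right s 1).continuous
  have hcont' : Continuous (deriv (g s)) := (hg.contDiff_right s 1).continuous_deriv_one
  calc wt m g s ψ ^ 2 = ((1 + ψ) ^ m) ^ 2 * g s ψ ^ 2 := mul_pow _ _ _
    _ ≤ ((1 + ψ) ^ m) ^ 2 * (2 * ∫ t in ψ..ψ + 1, (g s t ^ 2 + deriv (g s) t ^ 2)) := by
        gcongr
        refine hsob.trans_eq ?_
        norm_num
    _ = 2 * ∫ t in ψ..ψ + 1, ((1 + ψ) ^ m) ^ 2 * (g s t ^ 2 + deriv (g s) t ^ 2) := by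
        rw [intervalIntegral.integral_const_mul, mul_left_comm]
    _ ≤ 2 * ∫ t in ψ..ψ + 1, ((1 + t) ^ m) ^ 2 * (g s t ^ 2 + deriv (g s) t ^ 2) := by
        gcongr
        refine intervalIntegral.integral_mono_on (lt_add_one ψ).le
          (Continuous.intervalIntegrable (by fun_prop) _ _)
          (Continuous.intervalIntegrable (by fun_prop) _ _) fun t ht => ?_
        have hψt := ht.1
        gcongr
    _ = 2 * ∫ t in Ioc ψ (ψ + 1), (wt m g s t ^ 2 + wt m (dPsi 1 g) s t ^ 2) := by
        simp only [intervalIntegral.integral_of_le (lt_add_one ψ).le, wt, dPsi, iteratedDeriv_one,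
          mul_pow, mul_add]

lemma integral_wt_sq_le (hL : 0 ≤ L) (hg : Smooth2 g) (fin₀ : FiniteL2 L (wt m g))
    (fin₁ : FiniteL2 L (wt m (dPsi 1 g))) {ψ : ℝ} (hψ : 0 ≤ ψ) :
    ∫ s in (0 : ℝ)..L, wt m g s ψ ^ 2 ≤ 2 * (L2sq L (wt m g) + L2sq L (wt m (dPsi 1 g))) := by
  set H : ℝ × ℝ → ℝ := fun p => wt m g p.1 p.2 ^ 2 + wt m (dPsi 1 g) p.1 p.2 ^ 2
  have hstrip : Ioc (0 : ℝ) L ×ˢ Ioc ψ (ψ + 1) ⊆ Ioc 0 L ×ˢ Ioi 0 :=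
    prod_mono le_rfl fun t ht => hψ.trans_lt ht.1
  have hH_int : IntegrableOn H (Ioc 0 L ×ˢ Ioi 0) := Integrable.add fin₀ fin₁
  have hH_strip : IntegrableOn H (Ioc 0 L ×ˢ Ioc ψ (ψ + 1)) := hH_int.mono_set hstrip
  have hslice : IntegrableOn (fun s => ∫ t in Ioc ψ (ψ + 1), H (s, t)) (Ioc 0 L) := by
    rw [IntegrableOn, Measure.volume_eq_prod, ← Measure.prod_restrict] at hH_strip
    exact hH_strip.integral_prod_left
  have hcont : Continuous fun s => wt m g s ψ ^ 2 :=
    ((hg.wt m).contDiff_left ψ 0).continuous.pow 2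
  calc ∫ s in (0 : ℝ)..L, wt m g s ψ ^ 2
      ≤ ∫ s in Ioc 0 L, 2 * ∫ t in Ioc ψ (ψ + 1), H (s, t) := by
        rw [intervalIntegral.integral_of_le hL]
        exact setIntegral_mono (hcont.integrableOn_Icc.mono_set Ioc_subset_Icc_self)
          (hslice.const_mul 2) fun s => wt_sq_le_integral_strip hg m s hψ
    _ = 2 * ∫ p in Ioc 0 L ×ˢ Ioc ψ (ψ + 1), H p := by
        rw [integral_const_mul, Measure.volume_eq_prod, setIntegral_prod H hH_strip]
    _ ≤ 2 * ∫ p in Ioc 0 L ×ˢ Ioi 0, H p := by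
        refine mul_le_mul_of_nonneg_left (setIntegral_mono_set hH_int ?_ hstrip.eventuallyLE)
          zero_le_two
        exact .of_forall fun p => add_nonneg (sq_nonneg _) (sq_nonneg _)
    _ = 2 * (L2sq L (wt m g) + L2sq L (wt m (dPsi 1 g))) := by
        rw [integral_add fin₀ fin₁]; rfl

/-- The constant of the embedding `X_{1,m} ⊂ L^∞` on `𝕋_L × [0,∞)`. -/
noncomputable def sobolevConst (L : ℝ) : ℝ := 2 * (1 / L + 1)

lemma two_le_sobolevConst (hL : 0 < L) : 2 ≤ sobolevConst L := by
  have hinv : 0 < 1 / L := by positivity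
  rw [sobolevConst]
  linarith

lemma wt_sq_le_sobolevConst_mul (hL : 0 < L) (hg : Smooth2 g) (hper : PeriodicS L g)
    (fin : FiniteL2 L (wt m g)) (fin_s : FiniteL2 L (wt m (dS 1 g)))
    (fin_ψ : FiniteL2 L (wt m (dPsi 1 g))) (fin_sψ : FiniteL2 L (wt m (dPsi 1 (dS 1 g))))
    (s : ℝ) {ψ : ℝ} (hψ : 0 ≤ ψ) :
    wt m g s ψ ^ 2 ≤ sobolevConst L *
      ((L2sq L (wt m g) + L2sq L (wt m (dPsi 1 g)))
        + (L2sq L (wt m (dS 1 g)) + L2sq L (wt m (dPsi 1 (dS 1 g))))) := by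
  obtain ⟨s₀, hs₀, hs⟩ := (hper ψ).exists_mem_Ico₀ hL s
  have hwt : wt m g s ψ = wt m g s₀ ψ := congrArg (_ * ·) hs
  have hderiv : deriv (fun σ => wt m g σ ψ) = fun σ => wt m (dS 1 g) σ ψ := by
    funext σ
    simp only [wt, dS, iteratedDeriv_one, deriv_const_mul_field]
  have hcont {f : ℝ → ℝ → ℝ} (hf : Smooth2 f) :
      IntervalIntegrable (fun σ => wt m f σ ψ ^ 2) volume 0 L :=
    (((hf.wt m).contDiff_left ψ 0).continuous.pow 2).intervalIntegrable _ _
  have hsob := sq_le_mul_integral_sq_add_deriv_sq ((hg.wt m).contDiff_left ψ 1) hL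
    (Ico_subset_Icc_self hs₀)
  rw [hderiv, sub_zero, intervalIntegral.integral_add (hcont hg) (hcont (hg.dS 1))] at hsob
  rw [hwt, sobolevConst, mul_comm 2, mul_assoc, mul_add 2]
  refine hsob.trans ?_
  gcongr
  · exact integral_wt_sq_le hL.le hg fin fin_ψ hψ
  · exact integral_wt_sq_le hL.le (hg.dS 1) fin_s fin_sψ hψ

lemma weighted_abs_dS_le_Xnorm (hL : 0 < L) (hh : h ∈ smoothX L k m) {j : ℕ} (hj : j + 1 ≤ k)
    (s : ℝ) {ψ : ℝ} (hψ : 0 ≤ ψ) :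
    (1 + ψ) ^ m * |dS j h s ψ| ≤ sobolevConst L * Xnorm L k m h := by
  obtain ⟨smooth, periodic, finite⟩ := hh
  have hjk : j ≤ k := (Nat.le_succ j).trans hj
  obtain ⟨fin, fin_s, fin_ψ, -⟩ := finite j hjk m le_rfl
  obtain ⟨-, -, fin_sψ, -⟩ := finite (j + 1) hj m le_rfl
  rw [dS_succ] at fin_s fin_sψ
  have hsob := wt_sq_le_sobolevConst_mul hL (smooth.dS j) (periodic.dS j) fin fin_s fin_ψ fin_sψ
    s hψ
  have hterms {i : ℕ} (hi : i ≤ k) : L2sq L (wt m (dS i h)) + L2sq L (wt m (dPsi 1 (dS i h)))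
      ≤ Xnorm L k m h ^ 2 := by
    refine le_trans ?_ (XnormSqTerm_le_Xnorm_sq h hi le_rfl)
    rw [XnormSqTerm]
    linarith [L2sq_nonneg L (wt m (dS (i + 1) h)), L2sq_nonneg L (wt m (dPsi 2 (dS i h)))]
  have hK := two_le_sobolevConst hL
  rw [← abs_wt hψ]
  refine abs_le_of_sq_le_sq ?_ (mul_nonneg (by linarith) (Xnorm_nonneg _ _ _ _))
  calc wt m (dS j h) s ψ ^ 2
      ≤ sobolevConst L * (Xnorm L k m h ^ 2 + Xnorm L k m h ^ 2) := by
        refine hsob.trans (mul_le_mul_of_nonneg_left ?_ (by linarith))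
        exact add_le_add (hterms hjk) (dS_succ j h ▸ hterms hj)
    _ = sobolevConst L * 2 * Xnorm L k m h ^ 2 := by ring
    _ ≤ sobolevConst L * sobolevConst L * Xnorm L k m h ^ 2 := by gcongr
    _ = (sobolevConst L * Xnorm L k m h) ^ 2 := by ring

end Sobolev

/-! ### Jets of products and quotients -/

section Jets

/-- The size of the `n`-jet of `u` at `s`. -/
noncomputable def jetNorm (n : ℕ) (u : ℝ → ℝ) (s : ℝ) : ℝ :=
  ∑ j ∈ Finset.range (n + 1), |iteratedDeriv j u s|

/-- The jets of order at most two of `u` at `s` are controlled by those of `g`. The number `r`,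
which stands for the second derivative of a coefficient, is only allowed against the value of `g`,
the one quantity that is under control in `L^∞` uniformly when `r` is merely in `L²`. -/
structure JetDominatedAt (A r : ℝ) (u g : ℝ → ℝ) (s : ℝ) : Prop where
  zero : |u s| ≤ A * |g s|
  one : jetNorm 1 u s ≤ A * jetNorm 1 g s
  two : jetNorm 2 u s ≤ A * (jetNorm 2 g s + r * |g s|)

variable {A B c r t s : ℝ} {u v g W D q : ℝ → ℝ}

lemma jetNorm_one (u : ℝ → ℝ) (s : ℝ) : jetNorm 1 u s = |u s| + |deriv u s| := by
  simp [jetNorm, Finset.sum_range_succ]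

lemma jetNorm_two (u : ℝ → ℝ) (s : ℝ) :
    jetNorm 2 u s = |u s| + |deriv u s| + |iteratedDeriv 2 u s| := by
  simp [jetNorm, Finset.sum_range_succ]

lemma abs_iteratedDeriv_le_jetNorm {j n : ℕ} (hj : j ≤ n) (u : ℝ → ℝ) (s : ℝ) :
    |iteratedDeriv j u s| ≤ jetNorm n u s :=
  Finset.single_le_sum (f := fun j => |iteratedDeriv j u s|) (fun _ _ => abs_nonneg _)
    (Finset.mem_range_succ_iff.2 hj)

lemma deriv_mul_of_contDiff_two (hu : ContDiff ℝ 2 u) (hv : ContDiff ℝ 2 v) (s : ℝ) :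
    deriv (u * v) s = deriv u s * v s + u s * deriv v s :=
  deriv_mul (hu.differentiable two_ne_zero s) (hv.differentiable two_ne_zero s)

lemma iteratedDeriv_two_mul (hu : ContDiff ℝ 2 u) (hv : ContDiff ℝ 2 v) (s : ℝ) :
    iteratedDeriv 2 (u * v) s =
      u s * iteratedDeriv 2 v s + 2 * deriv u s * deriv v s + iteratedDeriv 2 u s * v s := by
  simp [iteratedDeriv_mul hu.contDiffAt hv.contDiffAt, Finset.sum_range_succ]

lemma JetDominatedAt.trans (huv : JetDominatedAt A r u v s) (hvg : JetDominatedAt B t v g s)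
    (hA : 0 ≤ A) (hr : 0 ≤ r) : JetDominatedAt (A * B) (r + t) u g s where
  zero := by
    rw [mul_assoc]
    exact huv.zero.trans (by gcongr; exact hvg.zero)
  one := by
    rw [mul_assoc]
    exact huv.one.trans (by gcongr; exact hvg.one)
  two := by
    calc jetNorm 2 u s ≤ A * (jetNorm 2 v s + r * |v s|) := huv.two
      _ ≤ A * (B * (jetNorm 2 g s + t * |g s|) + r * (B * |g s|)) := by
        gcongr
        exacts [hvg.two, hvg.zero]
      _ = A * B * (jetNorm 2 g s + (r + t) * |g s|) := by ring

lemma JetDominatedAt.mul_left (hq : ContDiff ℝ 2 q) (hg : ContDiff ℝ 2 g)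
    (hB : ∀ j ≤ 2, |iteratedDeriv j q s| ≤ B) : JetDominatedAt (3 * B) 0 (q * g) g s := by
  have hq₀ : |q s| ≤ B := by simpa using hB 0 zero_le_two
  have hq₁ : |deriv q s| ≤ B := by simpa using hB 1 one_le_two
  have hq₂ : |iteratedDeriv 2 q s| ≤ B := hB 2 le_rfl
  have h₀ : |(q * g) s| ≤ B * |g s| := by
    rw [Pi.mul_apply, abs_mul]
    gcongr
  have h₁ : |deriv (q * g) s| ≤ B * |g s| + B * |deriv g s| := by
    rw [deriv_mul_of_contDiff_two hq hg]
    refine (abs_add_le _ _).trans ?_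
    rw [abs_mul, abs_mul]
    gcongr
  have h₂ : |iteratedDeriv 2 (q * g) s| ≤
      B * |iteratedDeriv 2 g s| + 2 * B * |deriv g s| + B * |g s| := by
    rw [iteratedDeriv_two_mul hq hg]
    refine (abs_add_three _ _ _).trans ?_
    rw [abs_mul, abs_mul, abs_mul, abs_mul, abs_two]
    gcongr
  have hB₀ : 0 ≤ B := (abs_nonneg _).trans hq₀
  have hg₀ : 0 ≤ B * |g s| := by positivity
  have hg₁ : 0 ≤ B * |deriv g s| := by positivity
  have hg₂ : 0 ≤ B * |iteratedDeriv 2 g s| := by positivity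
  constructor
  · linarith
  · rw [jetNorm_one, jetNorm_one]
    linarith
  · rw [jetNorm_two, jetNorm_two]
    linarith

lemma abs_le_inv_mul_of_abs_mul_le {x d y : ℝ} (hc : 0 < c) (hd : c ≤ |d|) (h : |x * d| ≤ y) :
    |x| ≤ c⁻¹ * y := by
  rw [le_inv_mul_iff₀ hc, mul_comm]
  exact (mul_le_mul_of_nonneg_left hd (abs_nonneg x)).trans ((abs_mul x d).symm.trans_le h)

lemma abs_deriv_le_of_mul (hW : ContDiff ℝ 2 W) (hD : ContDiff ℝ 2 D) (hc : 0 < c)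
    (hD₀ : c ≤ |D s|) :
    |deriv W s| ≤ c⁻¹ * (|deriv (W * D) s| + |deriv D s| * |W s|) := by
  refine abs_le_inv_mul_of_abs_mul_le hc hD₀ ?_
  rw [eq_sub_of_add_eq (deriv_mul_of_contDiff_two hW hD s).symm]
  refine (abs_sub _ _).trans_eq ?_
  rw [abs_mul (W s), mul_comm |W s|]

lemma abs_iteratedDeriv_two_le_of_mul (hW : ContDiff ℝ 2 W) (hD : ContDiff ℝ 2 D) (hc : 0 < c)
    (hD₀ : c ≤ |D s|) :
    |iteratedDeriv 2 W s| ≤ c⁻¹ * (|iteratedDeriv 2 (W * D) s|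
      + (|iteratedDeriv 2 D s| * |W s| + 2 * |deriv D s| * |deriv W s|)) := by
  refine abs_le_inv_mul_of_abs_mul_le hc hD₀ ?_
  rw [eq_sub_of_add_eq' (iteratedDeriv_two_mul hW hD s).symm]
  refine (abs_sub _ _).trans ?_
  gcongr
  refine (abs_add_le _ _).trans_eq ?_
  rw [abs_mul, abs_mul, abs_mul, abs_two]
  ring

-- Differentiating `W * D`, rather than the quotient, expresses the derivatives of `W` recursively.
lemma JetDominatedAt.of_mul (hW : ContDiff ℝ 2 W) (hD : ContDiff ℝ 2 D) (hc : 0 < c)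
    (hB : 0 ≤ B) (hr : 0 ≤ r) (hD₀ : c ≤ |D s|) (hD₁ : |deriv D s| ≤ B)
    (hD₂ : |iteratedDeriv 2 D s| ≤ B * (1 + r)) :
    JetDominatedAt (2 * c⁻¹ * (1 + c⁻¹ * B) ^ 2) r W (W * D) s := by
  set U₀ := |(W * D) s|
  set U₁ := |deriv (W * D) s|
  set U₂ := |iteratedDeriv 2 (W * D) s|
  set x := c⁻¹ * B
  have : 0 < c⁻¹ := inv_pos.2 hc
  have : 0 ≤ x := by positivity
  have : 0 ≤ U₀ := abs_nonneg _
  have : 0 ≤ U₁ := abs_nonneg _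
  have : 0 ≤ U₂ := abs_nonneg _
  have hW₀ : |W s| ≤ c⁻¹ * U₀ := abs_le_inv_mul_of_abs_mul_le hc hD₀ le_rfl
  have hW₁ : |deriv W s| ≤ c⁻¹ * (U₁ + x * U₀) :=
    calc |deriv W s| ≤ c⁻¹ * (U₁ + B * (c⁻¹ * U₀)) :=
          (abs_deriv_le_of_mul hW hD hc hD₀).trans (by gcongr)
      _ = c⁻¹ * (U₁ + x * U₀) := by ring
  have hW₂ : |iteratedDeriv 2 W s| ≤ c⁻¹ * (U₂ + (x * (1 + r) * U₀ + 2 * x * (U₁ + x * U₀))) :=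
    calc |iteratedDeriv 2 W s|
        ≤ c⁻¹ * (U₂ + (B * (1 + r) * (c⁻¹ * U₀) + 2 * B * (c⁻¹ * (U₁ + x * U₀)))) :=
          (abs_iteratedDeriv_two_le_of_mul hW hD hc hD₀).trans (by gcongr)
      _ = c⁻¹ * (U₂ + (x * (1 + r) * U₀ + 2 * x * (U₁ + x * U₀))) := by ring
  constructor
  · change |W s| ≤ 2 * c⁻¹ * (1 + x) ^ 2 * U₀
    refine hW₀.trans (sub_nonneg.1 ?_)
    ring_nf
    positivity
  · rw [jetNorm_one, jetNorm_one]
    change _ ≤ 2 * c⁻¹ * (1 + x) ^ 2 * (U₀ + U₁)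
    refine (add_le_add hW₀ hW₁).trans (sub_nonneg.1 ?_)
    ring_nf
    positivity
  · rw [jetNorm_two, jetNorm_two]
    change _ ≤ 2 * c⁻¹ * (1 + x) ^ 2 * (U₀ + U₁ + U₂ + r * U₀)
    refine (add_le_add (add_le_add hW₀ hW₁) hW₂).trans (sub_nonneg.1 ?_)
    ring_nf
    positivity

/-- The constant of `JetDominatedAt.div_add`. -/
noncomputable def divConst (c B : ℝ) : ℝ := 2 * c⁻¹ * (1 + c⁻¹ * (B + c + 1)) ^ 2

lemma divConst_pos (hc : 0 < c) (hB : 0 ≤ B) : 0 < divConst c B := by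
  unfold divConst
  positivity

lemma le_add_of_two_mul_le_of_abs_le {x y : ℝ} (hx : 2 * c ≤ x) (hy : |y| ≤ c) : c ≤ x + y := by
  linarith [neg_le_of_abs_le hy]

lemma JetDominatedAt.div_add {d p : ℝ → ℝ} (hu : ContDiff ℝ 2 u) (hd : ContDiff ℝ 2 d)
    (hp : ContDiff ℝ 2 p) (hc : 0 < c) (hdc : ∀ s, 2 * c ≤ d s) (hpc : ∀ s, |p s| ≤ c)
    (hdB : ∀ j ≤ 2, |iteratedDeriv j d s| ≤ B) (hp' : |deriv p s| ≤ c) :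
    JetDominatedAt (divConst c B) |iteratedDeriv 2 p s| (u / (d + p)) u s := by
  have hlow (σ : ℝ) : c ≤ (d + p) σ := le_add_of_two_mul_le_of_abs_le (hdc σ) (hpc σ)
  have hne (σ : ℝ) : (d + p) σ ≠ 0 := (hc.trans_le (hlow σ)).ne'
  have hB : 0 ≤ B := (abs_nonneg _).trans (hdB 0 zero_le_two)
  have hD' : |deriv (d + p) s| ≤ B + c + 1 := by
    rw [deriv_add (hd.differentiable two_ne_zero s) (hp.differentiable two_ne_zero s)]
    linarith [abs_add_le (deriv d s) (deriv p s), iteratedDeriv_one (f := d) ▸ hdB 1 one_le_two]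
  have hD'' : |iteratedDeriv 2 (d + p) s| ≤ (B + c + 1) * (1 + |iteratedDeriv 2 p s|) := by
    rw [iteratedDeriv_add hd.contDiffAt hp.contDiffAt]
    have hr : 0 ≤ (B + c) * |iteratedDeriv 2 p s| := by positivity
    linarith [abs_add_le (iteratedDeriv 2 d s) (iteratedDeriv 2 p s), hdB 2 le_rfl]
  have hmul : u / (d + p) * (d + p) = u := funext fun σ => div_mul_cancel₀ (u σ) (hne σ)
  have hdom := JetDominatedAt.of_mul (W := u / (d + p)) (D := d + p)
    (hu.div (hd.add hp) hne) (hd.add hp) hc (by positivity) (abs_nonneg _)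
    ((hlow s).trans (le_abs_self _)) hD' hD''
  rwa [hmul] at hdom

lemma div_add_sub_div_add {α β : ℝ} {q p₁ p₂ : ℝ → ℝ} (h₁ : ∀ s, (α • q + p₁) s ≠ 0)
    (h₂ : ∀ s, (β • q + p₂) s ≠ 0) :
    p₁ / (α • q + p₁) - p₂ / (β • q + p₂) =
      q * (β • p₁ - α • p₂) / (α • q + p₁) / (β • q + p₂) := by
  funext s
  have h₁ := h₁ s
  have h₂ := h₂ s
  simp only [Pi.sub_apply, Pi.div_apply, Pi.mul_apply, Pi.add_apply, Pi.smul_apply,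
    smul_eq_mul] at h₁ h₂ ⊢
  rw [div_sub_div _ _ h₁ h₂, div_div]
  congr 1
  ring

lemma jetDominatedAt_div_add_sub_div_add {α β : ℝ} {p₁ p₂ : ℝ → ℝ} (hq : ContDiff ℝ 2 q)
    (hp₁ : ContDiff ℝ 2 p₁) (hp₂ : ContDiff ℝ 2 p₂) (hc : 0 < c)
    (hα : ∀ s, 2 * c ≤ (α • q) s) (hβ : ∀ s, 2 * c ≤ (β • q) s)
    (hqB : ∀ j ≤ 2, |iteratedDeriv j q s| ≤ B) (hαB : ∀ j ≤ 2, |iteratedDeriv j (α • q) s| ≤ B)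
    (hβB : ∀ j ≤ 2, |iteratedDeriv j (β • q) s| ≤ B)
    (hp₁c : ∀ s, |p₁ s| ≤ c) (hp₂c : ∀ s, |p₂ s| ≤ c)
    (hp₁' : |deriv p₁ s| ≤ c) (hp₂' : |deriv p₂ s| ≤ c) :
    JetDominatedAt (divConst c B ^ 2 * (3 * B)) (|iteratedDeriv 2 p₁ s| + |iteratedDeriv 2 p₂ s|)
      (p₁ / (α • q + p₁) - p₂ / (β • q + p₂)) (β • p₁ - α • p₂) s := by
  have hne {d p : ℝ → ℝ} (hd : ∀ s, 2 * c ≤ d s) (hp : ∀ s, |p s| ≤ c) (σ : ℝ) :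
      (d + p) σ ≠ 0 :=
    (hc.trans_le (le_add_of_two_mul_le_of_abs_le (hd σ) (hp σ))).ne'
  have hα₂ : ContDiff ℝ 2 (α • q) := hq.const_smul α
  have hβ₂ : ContDiff ℝ 2 (β • q) := hq.const_smul β
  have hG : ContDiff ℝ 2 (β • p₁ - α • p₂) := (hp₁.const_smul β).sub (hp₂.const_smul α)
  have hκ : 0 ≤ divConst c B := (divConst_pos hc ((abs_nonneg _).trans (hqB 0 zero_le_two))).le
  have dom_mul := JetDominatedAt.mul_left hq hG hqB
  have dom_div₁ := JetDominatedAt.div_add (hq.mul hG) hα₂ hp₁ hc hα hp₁c hαB hp₁'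
  have dom_div₂ := JetDominatedAt.div_add ((hq.mul hG).div (hα₂.add hp₁) (hne hα hp₁c)) hβ₂ hp₂
    hc hβ hp₂c hβB hp₂'
  have dom := (dom_div₂.trans dom_div₁ hκ (abs_nonneg _)).trans dom_mul (mul_nonneg hκ hκ)
    (by positivity)
  rw [div_add_sub_div_add (hne hα hp₁c) (hne hβ hp₂c)]
  rwa [add_zero, add_comm, ← pow_two] at dom

end Jets

/-! ### Jet domination against `X_{2,m}` -/

section Multiplier

/-- The pair of estimates of the theorem for a function `u`, with right-hand side `N`: weighted
`L^∞` bounds (stated pointwise) for one tangential derivative, weighted `L²` bounds for two. -/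
def InftyL2Bound (L : ℝ) (m : ℕ) (u : ℝ → ℝ → ℝ) (N : ℝ) : Prop :=
  (∀ s, ∀ ψ ≥ (0 : ℝ), ∑ j ∈ Finset.range 2, (1 + ψ) ^ m * |dS j u s ψ| ≤ N) ∧
    ∑ j ∈ Finset.range 3, √(L2sq L (wt m (dS j u))) ≤ N

variable {L A D N N' : ℝ} {m : ℕ} {W G ρ u : ℝ → ℝ → ℝ}

lemma InftyL2Bound.mono (hu : InftyL2Bound L m u N) (hN : N ≤ N') : InftyL2Bound L m u N' :=
  ⟨fun s ψ hψ => (hu.1 s ψ hψ).trans hN, hu.2.trans hN⟩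

lemma sum_weighted_abs_dS_le_of_jetDominatedAt (hL : 0 < L) (hG : G ∈ smoothX L 2 m) (hA : 0 ≤ A)
    {r s ψ : ℝ} (hψ : 0 ≤ ψ) (hdom : JetDominatedAt A r (W · ψ) (G · ψ) s) :
    ∑ j ∈ Finset.range 2, (1 + ψ) ^ m * |dS j W s ψ|
      ≤ 2 * A * sobolevConst L * Xnorm L 2 m G :=
  calc ∑ j ∈ Finset.range 2, (1 + ψ) ^ m * |dS j W s ψ|
      = (1 + ψ) ^ m * jetNorm 1 (W · ψ) s := (Finset.mul_sum _ _ _).symm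
    _ ≤ (1 + ψ) ^ m * (A * jetNorm 1 (G · ψ) s) := by
        gcongr
        exact hdom.one
    _ = A * ∑ j ∈ Finset.range 2, (1 + ψ) ^ m * |dS j G s ψ| := by
        rw [mul_left_comm, ← Finset.mul_sum]
        rfl
    _ ≤ A * ∑ _j ∈ Finset.range 2, sobolevConst L * Xnorm L 2 m G := by
        refine mul_le_mul_of_nonneg_left (Finset.sum_le_sum fun j hj => ?_) hA
        exact weighted_abs_dS_le_Xnorm hL hG (Finset.mem_range.1 hj) s hψ
    _ = 2 * A * sobolevConst L * Xnorm L 2 m G := by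
        rw [Finset.sum_const, Finset.card_range, nsmul_eq_mul]
        push_cast
        ring

lemma abs_wt_dS_le_of_jetDominatedAt (hL : 0 < L) (hG : G ∈ smoothX L 2 m) (hA : 0 ≤ A)
    {j : ℕ} (hj : j ≤ 2) {s ψ : ℝ} (hψ : 0 ≤ ψ)
    (hdom : JetDominatedAt A (ρ s ψ) (W · ψ) (G · ψ) s) :
    |wt m (dS j W) s ψ| ≤ A * (|wt m (dS 0 G) s ψ| + |wt m (dS 1 G) s ψ| + |wt m (dS 2 G) s ψ|
      + sobolevConst L * Xnorm L 2 m G * |ρ s ψ|) := by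
  have hsup : (1 + ψ) ^ m * |G s ψ| ≤ sobolevConst L * Xnorm L 2 m G := by
    simpa only [dS_zero] using weighted_abs_dS_le_Xnorm hL hG (j := 0) one_le_two s hψ
  calc |wt m (dS j W) s ψ| = (1 + ψ) ^ m * |dS j W s ψ| := abs_wt hψ m _ s
    _ ≤ (1 + ψ) ^ m * (A * (jetNorm 2 (G · ψ) s + |ρ s ψ| * |G s ψ|)) := by
        gcongr
        refine (abs_iteratedDeriv_le_jetNorm hj (W · ψ) s).trans (hdom.two.trans ?_)
        gcongr
        exact le_abs_self _
    _ = A * (|wt m (dS 0 G) s ψ| + |wt m (dS 1 G) s ψ| + |wt m (dS 2 G) s ψ|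
          + (1 + ψ) ^ m * |G s ψ| * |ρ s ψ|) := by
        simp only [abs_wt hψ, jetNorm, Finset.sum_range_succ, Finset.sum_range_zero, zero_add, dS]
        ring
    _ ≤ _ := by gcongr

lemma L2sq_wt_dS_le_of_jetDominatedAt (hL : 0 < L) (hG : G ∈ smoothX L 2 m) (hA : 0 ≤ A)
    (hρ : FiniteL2 L ρ) (hdom : ∀ s, ∀ ψ > 0, JetDominatedAt A (ρ s ψ) (W · ψ) (G · ψ) s)
    {j : ℕ} (hj : j ≤ 2) :
    L2sq L (wt m (dS j W)) ≤ 4 * (A ^ 2 * (L2sq L (wt m (dS 0 G)) + L2sq L (wt m (dS 1 G))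
      + L2sq L (wt m (dS 2 G))) + (A * (sobolevConst L * Xnorm L 2 m G)) ^ 2 * L2sq L ρ) := by
  set M := A * (sobolevConst L * Xnorm L 2 m G)
  have hM : 0 ≤ M := mul_nonneg hA
    (mul_nonneg (zero_le_two.trans (two_le_sobolevConst hL)) (Xnorm_nonneg _ _ _ _))
  let F : Fin 4 → ℝ → ℝ → ℝ :=
    ![A • wt m (dS 0 G), A • wt m (dS 1 G), A • wt m (dS 2 G), M • ρ]
  have hfin {i : ℕ} (hi : i ≤ 2) : FiniteL2 L (A • wt m (dS i G)) :=
    (hG.2.2 i hi m le_rfl).1.const_smul A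
  have hF_fin : ∀ i ∈ Finset.univ, FiniteL2 L (F i) := by
    simp only [F, Finset.mem_univ, forall_const, Fin.forall_fin_succ]
    exact ⟨hfin zero_le_two, hfin one_le_two, hfin le_rfl, hρ.const_smul M, nofun⟩
  have hF_dom (s ψ : ℝ) (hψ : 0 < ψ) : |wt m (dS j W) s ψ| ≤ ∑ i, |F i s ψ| := by
    refine (abs_wt_dS_le_of_jetDominatedAt hL hG hA hj hψ.le (hdom s ψ hψ)).trans_eq ?_
    simp only [F, Fin.sum_univ_four, Matrix.cons_val, Pi.smul_apply, smul_eq_mul, abs_mul,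
      abs_of_nonneg hA, abs_of_nonneg hM]
    ring
  refine (L2sq_le_card_mul_sum hF_fin hF_dom).trans_eq ?_
  simp only [F, Fin.sum_univ_four, Matrix.cons_val, L2sq_smul, Finset.card_univ, Fintype.card_fin]
  push_cast
  ring

lemma sqrt_L2sq_wt_dS_le_of_jetDominatedAt (hL : 0 < L) (hG : G ∈ smoothX L 2 m) (hA : 0 ≤ A)
    (hρ_fin : FiniteL2 L ρ) (hD : 0 ≤ D) (hρ : L2sq L ρ ≤ D ^ 2)
    (hdom : ∀ s, ∀ ψ > 0, JetDominatedAt A (ρ s ψ) (W · ψ) (G · ψ) s) {j : ℕ} (hj : j ≤ 2) :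
    √(L2sq L (wt m (dS j W))) ≤ 2 * A * sobolevConst L * (1 + D) * Xnorm L 2 m G := by
  set K := sobolevConst L
  set X := Xnorm L 2 m G
  have hK : 2 ≤ K := two_le_sobolevConst hL
  have hX : 0 ≤ X := Xnorm_nonneg _ _ _ _
  have hle {i : ℕ} (hi : i ≤ 2) : L2sq L (wt m (dS i G)) ≤ X ^ 2 :=
    L2sq_wt_dS_le_Xnorm_sq G hi le_rfl
  refine Real.sqrt_le_iff.2 ⟨by positivity, ?_⟩
  calc L2sq L (wt m (dS j W))
      ≤ 4 * (A ^ 2 * (X ^ 2 + X ^ 2 + X ^ 2) + (A * (K * X)) ^ 2 * D ^ 2) := by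
        refine (L2sq_wt_dS_le_of_jetDominatedAt hL hG hA hρ_fin hdom hj).trans ?_
        gcongr
        exacts [hle zero_le_two, hle one_le_two, hle le_rfl]
    _ = (2 * A * X) ^ 2 * (3 + (K * D) ^ 2) := by ring
    _ ≤ (2 * A * X) ^ 2 * (K * (1 + D)) ^ 2 := by
        gcongr
        nlinarith [mul_nonneg (zero_le_two.trans hK) hD]
    _ = (2 * A * K * (1 + D) * X) ^ 2 := by ring

lemma inftyL2Bound_of_jetDominatedAt (hL : 0 < L) (hG : G ∈ smoothX L 2 m) (hA : 0 ≤ A)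
    (hρ_fin : FiniteL2 L ρ) (hD : 0 ≤ D) (hρ : L2sq L ρ ≤ D ^ 2)
    (hdom : ∀ s, ∀ ψ ≥ 0, JetDominatedAt A (ρ s ψ) (W · ψ) (G · ψ) s) :
    InftyL2Bound L m W (6 * A * sobolevConst L * (1 + D) * Xnorm L 2 m G) := by
  have hK : 0 ≤ A * sobolevConst L * Xnorm L 2 m G :=
    mul_nonneg (mul_nonneg hA (zero_le_two.trans (two_le_sobolevConst hL))) (Xnorm_nonneg _ _ _ _)
  refine ⟨fun s ψ hψ => ?_, ?_⟩
  · refine (sum_weighted_abs_dS_le_of_jetDominatedAt hL hG hA hψ (hdom s ψ hψ)).trans ?_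
    linarith [mul_nonneg hK hD]
  · calc ∑ j ∈ Finset.range 3, √(L2sq L (wt m (dS j W)))
        ≤ ∑ _j ∈ Finset.range 3, 2 * A * sobolevConst L * (1 + D) * Xnorm L 2 m G :=
          Finset.sum_le_sum fun j hj => sqrt_L2sq_wt_dS_le_of_jetDominatedAt hL hG hA hρ_fin hD hρ
            (fun s ψ hψ => hdom s ψ (le_of_lt hψ)) (Finset.mem_range_succ_iff.1 hj)
      _ = 6 * A * sobolevConst L * (1 + D) * Xnorm L 2 m G := by
          rw [Finset.sum_const, Finset.card_range, nsmul_eq_mul]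
          push_cast
          ring

end Multiplier

/-! ### Differences of `Q / (α q + Q)` -/

section Differences

lemma exists_forall_abs_iteratedDeriv_le {q : ℝ → ℝ} {L : ℝ} {n : ℕ} (hL : L ≠ 0)
    (hq : ContDiff ℝ n q) (hper : Periodic q L) :
    ∃ B, ∀ j ≤ n, ∀ s, |iteratedDeriv j q s| ≤ B := by
  have hbdd (j : ℕ) (hj : j ≤ n) : ∃ B, ∀ s, |iteratedDeriv j q s| ≤ B := by
    obtain ⟨B, hB⟩ := ((periodic_iteratedDeriv hper j).isBounded_of_continuous hL
      (hq.continuous_iteratedDeriv j (mod_cast hj))).exists_norm_le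
    exact ⟨B, fun s => hB _ (mem_range_self s)⟩
  choose! B hB using hbdd
  refine ⟨∑ j ∈ Finset.range (n + 1), |B j|, fun j hj s => ?_⟩
  calc |iteratedDeriv j q s| ≤ |B j| := (hB j hj s).trans (le_abs_self _)
    _ ≤ ∑ j ∈ Finset.range (n + 1), |B j| :=
      Finset.single_le_sum (f := fun j => |B j|) (fun _ _ => abs_nonneg _)
        (Finset.mem_range_succ_iff.2 hj)

lemma exists_pos_forall_le {q : ℝ → ℝ} {L : ℝ} (hL : L ≠ 0) (hq : Continuous q)
    (hper : Periodic q L) (hpos : ∀ s, 0 < q s) : ∃ c > 0, ∀ s, c ≤ q s := by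
  obtain ⟨_, ⟨s₀, rfl⟩, hmin⟩ := (hper.compact_of_continuous hL hq).exists_isLeast
    (range_nonempty q)
  exact ⟨q s₀, hpos s₀, fun s => hmin (mem_range_self s)⟩

/-- The difference `U₁ - U₂` of the auxiliary quantities `Q₁ / (α q + Q₁)` and
`Q₂ / (β q + Q₂)`. -/
noncomputable def Udiff (α β : ℝ) (q : ℝ → ℝ) (Q₁ Q₂ : ℝ → ℝ → ℝ) : ℝ → ℝ → ℝ :=
  fun s ψ => Q₁ s ψ / (α * q s + Q₁ s ψ) - Q₂ s ψ / (β * q s + Q₂ s ψ)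

variable {L : ℝ} {k m : ℕ} {f g h Q₁ Q₂ : ℝ → ℝ → ℝ}

lemma abs_dS_le_Xnorm (hL : 0 < L) (hh : h ∈ smoothX L k m) {j : ℕ} (hj : j + 1 ≤ k)
    (s : ℝ) {ψ : ℝ} (hψ : 0 ≤ ψ) : |dS j h s ψ| ≤ sobolevConst L * Xnorm L k m h :=
  (le_mul_of_one_le_left (abs_nonneg _) (one_le_pow₀ (le_add_of_nonneg_right hψ))).trans
    (weighted_abs_dS_le_Xnorm hL hh hj s hψ)

lemma FiniteL2.dS_of_mem_smoothX (hh : h ∈ smoothX L k m) {j : ℕ} (hj : j ≤ k) :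
    FiniteL2 L (dS j h) :=
  wt_zero (dS j h) ▸ (hh.2.2 j hj 0 m.zero_le).1

lemma L2sq_dS_le_Xnorm_sq (h : ℝ → ℝ → ℝ) {j : ℕ} (hj : j ≤ k) :
    L2sq L (dS j h) ≤ Xnorm L k m h ^ 2 :=
  wt_zero (dS j h) ▸ L2sq_wt_dS_le_Xnorm_sq h hj m.zero_le

lemma Xnorm_smul_sub_smul_le (hf : f ∈ smoothX L k m) (hg : g ∈ smoothX L k m) {α β b : ℝ}
    (hβ : |β| ≤ b) :
    Xnorm L k m (β • f - α • g) ≤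
      2 * (1 + b) * (Xnorm L k m (f - g) + |α - β| * Xnorm L k m g) := by
  have hsplit : β • f - α • g = β • (f - g) + (β - α) • g := by module
  have hb : 0 ≤ b := (abs_nonneg β).trans hβ
  have hfg : 0 ≤ Xnorm L k m (f - g) := Xnorm_nonneg _ _ _ _
  have hg₀ : 0 ≤ b * (|α - β| * Xnorm L k m g) :=
    mul_nonneg hb (mul_nonneg (abs_nonneg _) (Xnorm_nonneg _ _ _ _))
  calc Xnorm L k m (β • f - α • g)
      ≤ 2 * (Xnorm L k m (β • (f - g)) + Xnorm L k m ((β - α) • g)) := by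
        rw [hsplit]
        exact Xnorm_add_le (Submodule.smul_mem _ _ (Submodule.sub_mem _ hf hg))
          (Submodule.smul_mem _ _ hg)
    _ ≤ 2 * (b * Xnorm L k m (f - g) + |α - β| * Xnorm L k m g) := by
        rw [Xnorm_smul, Xnorm_smul, abs_sub_comm β α]
        gcongr
    _ ≤ 2 * (1 + b) * (Xnorm L k m (f - g) + |α - β| * Xnorm L k m g) := by linarith

variable {α β b c B δ : ℝ} {q : ℝ → ℝ}

lemma jetDominatedAt_Udiff (hq : ContDiff ℝ 2 q) (hc : 0 < c) (hα : ∀ s, 2 * c ≤ α * q s)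
    (hβ : ∀ s, 2 * c ≤ β * q s) (hαb : |α| ≤ b) (hβb : |β| ≤ b)
    (hB : ∀ j ≤ 2, ∀ s, |iteratedDeriv j q s| ≤ B) (hQ₁ : Smooth2 Q₁) (hQ₂ : Smooth2 Q₂) {ψ : ℝ}
    (hQ₁c : ∀ j ≤ 1, ∀ s, |dS j Q₁ s ψ| ≤ c) (hQ₂c : ∀ j ≤ 1, ∀ s, |dS j Q₂ s ψ| ≤ c) (s : ℝ) :
    JetDominatedAt (divConst c ((1 + b) * B) ^ 2 * (3 * ((1 + b) * B)))
      (|dS 2 Q₁ s ψ| + |dS 2 Q₂ s ψ|) (Udiff α β q Q₁ Q₂ · ψ) ((β • Q₁ - α • Q₂) · ψ) s := by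
  have hb₀ : 0 ≤ b := (abs_nonneg _).trans hαb
  have hB₀ : 0 ≤ B := (abs_nonneg _).trans (hB 0 zero_le_two s)
  have hqB (j : ℕ) (hj : j ≤ 2) : |iteratedDeriv j q s| ≤ (1 + b) * B :=
    (hB j hj s).trans (le_mul_of_one_le_left hB₀ (le_add_of_nonneg_right hb₀))
  have hsmulB {γ : ℝ} (hγ : |γ| ≤ b) (j : ℕ) (hj : j ≤ 2) :
      |iteratedDeriv j (γ • q) s| ≤ (1 + b) * B := by
    rw [iteratedDeriv_const_smul_field, smul_eq_mul, abs_mul]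
    exact mul_le_mul (hγ.trans (le_add_of_nonneg_left zero_le_one)) (hB j hj s) (abs_nonneg _)
      (by positivity)
  have hzero {Q : ℝ → ℝ → ℝ} (h : ∀ j ≤ 1, ∀ s, |dS j Q s ψ| ≤ c) (σ : ℝ) : |Q σ ψ| ≤ c :=
    dS_zero Q ▸ h 0 zero_le_one σ
  have hone {Q : ℝ → ℝ → ℝ} (h : ∀ j ≤ 1, ∀ s, |dS j Q s ψ| ≤ c) : |deriv (Q · ψ) s| ≤ c := by
    simpa only [dS, iteratedDeriv_one] using h 1 le_rfl s
  exact jetDominatedAt_div_add_sub_div_add hq (hQ₁.contDiff_left ψ 2) (hQ₂.contDiff_left ψ 2) hc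
    hα hβ hqB (hsmulB hαb) (hsmulB hβb) (hzero hQ₁c) (hzero hQ₂c) (hone hQ₁c) (hone hQ₂c)

lemma inftyL2Bound_Udiff (hL : 0 < L) (hq : ContDiff ℝ 2 q) (hc : 0 < c)
    (hα : ∀ s, 2 * c ≤ α * q s) (hβ : ∀ s, 2 * c ≤ β * q s) (hαb : |α| ≤ b) (hβb : |β| ≤ b)
    (hB : ∀ j ≤ 2, ∀ s, |iteratedDeriv j q s| ≤ B) (hQ₁ : Q₁ ∈ smoothX L 2 m)
    (hQ₂ : Q₂ ∈ smoothX L 2 m) (hδ₁ : Xnorm L 2 m Q₁ ≤ δ) (hδ₂ : Xnorm L 2 m Q₂ ≤ δ)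
    (hδc : sobolevConst L * δ ≤ c) :
    InftyL2Bound L m (Udiff α β q Q₁ Q₂)
      (6 * (divConst c ((1 + b) * B) ^ 2 * (3 * ((1 + b) * B))) * sobolevConst L * (1 + 2 * δ)
        * Xnorm L 2 m (β • Q₁ - α • Q₂)) := by
  have hb₀ : 0 ≤ b := (abs_nonneg _).trans hαb
  have hB₀ : 0 ≤ B := (abs_nonneg _).trans (hB 0 zero_le_two 0)
  have hδ₀ : 0 ≤ δ := (Xnorm_nonneg _ _ _ _).trans hδ₁
  have hK : 0 ≤ sobolevConst L := zero_le_two.trans (two_le_sobolevConst hL)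
  have hsmall {Q : ℝ → ℝ → ℝ} (hQ : Q ∈ smoothX L 2 m) (hδ : Xnorm L 2 m Q ≤ δ) {ψ : ℝ}
      (hψ : 0 ≤ ψ) (j : ℕ) (hj : j ≤ 1) (s : ℝ) : |dS j Q s ψ| ≤ c :=
    (abs_dS_le_Xnorm hL hQ (Nat.succ_le_succ hj) s hψ).trans (le_trans (by gcongr) hδc)
  have hfin₁ := FiniteL2.dS_of_mem_smoothX hQ₁ le_rfl
  have hfin₂ := FiniteL2.dS_of_mem_smoothX hQ₂ le_rfl
  have hρ_le (s ψ : ℝ) (_ : ψ > 0) :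
      |(|dS 2 Q₁ s ψ| + |dS 2 Q₂ s ψ|)| ≤ |dS 2 Q₁ s ψ| + |dS 2 Q₂ s ψ| :=
    (abs_of_nonneg (by positivity)).le
  refine inftyL2Bound_of_jetDominatedAt hL
    (Submodule.sub_mem _ (Submodule.smul_mem _ _ hQ₁) (Submodule.smul_mem _ _ hQ₂))
    (by positivity)
    (hfin₁.of_abs_le_add hfin₂
      ((hQ₁.1.dS 2).continuous.abs.add (hQ₂.1.dS 2).continuous.abs) hρ_le)
    (by positivity) ?_ fun s ψ hψ => jetDominatedAt_Udiff hq hc hα hβ hαb hβb hB hQ₁.1 hQ₂.1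
      (hsmall hQ₁ hδ₁ hψ) (hsmall hQ₂ hδ₂ hψ) s
  calc L2sq L (fun s ψ => |dS 2 Q₁ s ψ| + |dS 2 Q₂ s ψ|)
      ≤ 2 * (L2sq L (dS 2 Q₁) + L2sq L (dS 2 Q₂)) := L2sq_le_two_mul_add hfin₁ hfin₂ hρ_le
    _ ≤ 2 * (Xnorm L 2 m Q₁ ^ 2 + Xnorm L 2 m Q₂ ^ 2) := by
        gcongr <;> exact L2sq_dS_le_Xnorm_sq _ le_rfl
    _ ≤ 2 * (δ ^ 2 + δ ^ 2) := by
        gcongr <;> exact Xnorm_nonneg _ _ _ _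
    _ = (2 * δ) ^ 2 := by ring

theorem exists_inftyL2Bound_Udiff (hL : 0 < L) {a b : ℝ} (ha : 0 < a) {q : ℝ → ℝ}
    (hq : ContDiff ℝ 2 q) (hper : Periodic q L) (hpos : ∀ s, 0 < q s) :
    ∃ δ > 0, ∃ C > 0, ∀ α ∈ Icc a b, ∀ β ∈ Icc a b, ∀ m : ℕ,
      ∀ Q₁ ∈ smoothX L 2 m, ∀ Q₂ ∈ smoothX L 2 m, Xnorm L 2 m Q₁ ≤ δ → Xnorm L 2 m Q₂ ≤ δ →
        InftyL2Bound L m (Udiff α β q Q₁ Q₂)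
          (C * (Xnorm L 2 m (Q₁ - Q₂) + |α - β| * Xnorm L 2 m Q₂)) := by
  obtain ⟨c₀, hc₀, hqc⟩ := exists_pos_forall_le hL.ne' hq.continuous hper hpos
  obtain ⟨B, hB⟩ := exists_forall_abs_iteratedDeriv_le (n := 2) hL.ne' hq hper
  have hB₀ : 0 < B := (abs_pos.2 (hpos 0).ne').trans_le (hB 0 zero_le_two 0)
  have hK : 0 < sobolevConst L := zero_lt_two.trans_le (two_le_sobolevConst hL)
  set c := a * c₀ / 2
  have hc : 0 < c := by positivity
  set A := divConst c ((1 + |b|) * B) ^ 2 * (3 * ((1 + |b|) * B))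
  have hA : 0 < A := by
    have := divConst_pos hc (B := (1 + |b|) * B) (by positivity)
    positivity
  set δ := c / sobolevConst L
  have hδ : 0 < δ := by positivity
  set C := 6 * A * sobolevConst L * (1 + 2 * δ)
  refine ⟨δ, hδ, C * (2 * (1 + |b|)), by positivity, ?_⟩
  intro α hα β hβ m Q₁ hQ₁ Q₂ hQ₂ hδ₁ hδ₂
  have hlow {γ : ℝ} (hγ : γ ∈ Icc a b) (s : ℝ) : 2 * c ≤ γ * q s := by
    rw [mul_div_cancel₀ _ two_ne_zero]
    exact mul_le_mul hγ.1 (hqc s) hc₀.le (ha.le.trans hγ.1)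
  have habs {γ : ℝ} (hγ : γ ∈ Icc a b) : |γ| ≤ |b| :=
    abs_le_abs_of_nonneg (ha.le.trans hγ.1) hγ.2
  refine (inftyL2Bound_Udiff hL hq hc (hlow hα) (hlow hβ) (habs hα) (habs hβ) hB hQ₁ hQ₂ hδ₁ hδ₂
    (mul_div_cancel₀ _ hK.ne').le).mono ?_
  rw [mul_assoc C]
  gcongr
  exact Xnorm_smul_sub_smul_le hQ₁ hQ₂ (habs hβ)

end Differences

lemma exists_forall_rpow_le {γ δ : ℝ} (hγ : 0 < γ) (hδ : 0 < δ) :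
    ∃ ε₀ : ℝ, 0 < ε₀ ∧ ε₀ < 1 ∧ ∀ ε : ℝ, 0 < ε → ε < ε₀ → ε ^ γ ≤ δ := by
  have hroot : 0 < δ ^ γ⁻¹ := Real.rpow_pos_of_pos hδ _
  refine ⟨min (1 / 2) (δ ^ γ⁻¹), lt_min one_half_pos hroot,
    (min_le_left _ _).trans_lt one_half_lt_one, fun ε hε hεlt => ?_⟩
  calc ε ^ γ ≤ (δ ^ γ⁻¹) ^ γ :=
        Real.rpow_le_rpow hε.le (hεlt.le.trans (min_le_right _ _)) hγ.le
    _ = δ := Real.rpow_inv_rpow hδ.le hγ.ne'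

theorem U_difference_estimates_general {L : ℝ} (hL : 0 < L) {q_e : ℝ → ℝ}
    (hqe : ContDiff ℝ 2 q_e) (hqeper : Periodic q_e L) (hqe0 : ∀ s, q_e s ≠ 0)
    {a b γ : ℝ} (ha : 0 < a) (hγ : 0 < γ) :
    ∃ ε₀ : ℝ, 0 < ε₀ ∧ ε₀ < 1 ∧ ∃ C > (0 : ℝ), ∀ ε : ℝ, 0 < ε → ε < ε₀ →
      ∀ ω₁ ∈ Icc a b, ∀ ω₂ ∈ Icc a b, ∀ ωbar₁ ωbar₂ : ℝ,
        ω₁ ^ 2 = 1 - ε * ωbar₁ → ω₂ ^ 2 = 1 - ε * ωbar₂ →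
      ∀ m : ℕ, ∀ Q₁ ∈ smoothX L 2 m, ∀ Q₂ ∈ smoothX L 2 m,
        Xnorm L 2 m Q₁ ≤ ε ^ γ → Xnorm L 2 m Q₂ ≤ ε ^ γ →
        InftyL2Bound L m (Udiff (ω₁ ^ 2) (ω₂ ^ 2) (fun s => q_e s ^ 2) Q₁ Q₂)
          (C * (Xnorm L 2 m (Q₁ - Q₂) + ε ^ (1 + γ) * |ωbar₁ - ωbar₂|)) := by
  obtain ⟨δ, hδ, C, hC, hbound⟩ := exists_inftyL2Bound_Udiff (a := a ^ 2) (b := b ^ 2) hL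
    (pow_pos ha 2) (hqe.pow 2) (fun s => congrArg (· ^ 2) (hqeper s))
    (fun s => sq_pos_of_ne_zero (hqe0 s))
  obtain ⟨ε₀, hε₀, hε₀1, hsmall⟩ := exists_forall_rpow_le hγ hδ
  refine ⟨ε₀, hε₀, hε₀1, C, hC, ?_⟩
  intro ε hε hεlt ω₁ hω₁ ω₂ hω₂ ωbar₁ ωbar₂ hω₁_eq hω₂_eq m Q₁ hQ₁ Q₂ hQ₂ hQ₁_le hQ₂_le
  have hsq {ω : ℝ} (hω : ω ∈ Icc a b) : ω ^ 2 ∈ Icc (a ^ 2) (b ^ 2) :=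
    ⟨pow_le_pow_left₀ ha.le hω.1 2, pow_le_pow_left₀ (ha.le.trans hω.1) hω.2 2⟩
  have hεδ : ε ^ γ ≤ δ := hsmall ε hε hεlt
  refine (hbound _ (hsq hω₁) _ (hsq hω₂) m Q₁ hQ₁ Q₂ hQ₂ (hQ₁_le.trans hεδ)
    (hQ₂_le.trans hεδ)).mono ?_
  gcongr C * (_ + ?_)
  calc |ω₁ ^ 2 - ω₂ ^ 2| * Xnorm L 2 m Q₂ = ε * |ωbar₁ - ωbar₂| * Xnorm L 2 m Q₂ := by
        rw [hω₁_eq, hω₂_eq, abs_sub_comm ωbar₁, ← abs_of_pos hε, ← abs_mul, abs_of_pos hε]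
        congr 2
        ring
    _ ≤ ε * |ωbar₁ - ωbar₂| * ε ^ γ := by gcongr
    _ = ε ^ (1 + γ) * |ωbar₁ - ωbar₂| := by
        rw [Real.rpow_add hε, Real.rpow_one, mul_right_comm]

/-- **Stability of the auxiliary quantity `U = Q/(ω²q_e² + Q)` in differences.** -/
theorem U_difference_estimates
    (L : ℝ) (hL : 0 < L)
    (q_e : ℝ → ℝ) (hqe : ContDiff ℝ (⊤ : ℕ∞) q_e) (hqeper : Function.Periodic q_e L)
    (hqepos : ∀ s, 0 < q_e s)
    (C₀ : ℝ) (hC₀ : 0 < C₀) :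
    ∃ ε₀ : ℝ, 0 < ε₀ ∧ ε₀ < 1 ∧ ∃ C > (0:ℝ),
      ∀ ε : ℝ, 0 < ε → ε < ε₀ →
      ∀ ω₁ ω₂ ωbar₁ ωbar₂ : ℝ,
        1/2 ≤ ω₁ → ω₁ ≤ 2 → 1/2 ≤ ω₂ → ω₂ ≤ 2 →
        ω₁ ^ 2 = 1 - ε * ωbar₁ → ω₂ ^ 2 = 1 - ε * ωbar₂ →
        |ωbar₁| ≤ C₀ → |ωbar₂| ≤ C₀ →
      ∀ Q₁ Q₂ : ℝ → ℝ → ℝ,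
        Smooth2 Q₁ → PeriodicS L Q₁ → XFinite L 2 50 Q₁ →
        Xnorm L 2 50 Q₁ ≤ ε ^ (0.99 : ℝ) →
        Smooth2 Q₂ → PeriodicS L Q₂ → XFinite L 2 50 Q₂ →
        Xnorm L 2 50 Q₂ ≤ ε ^ (0.99 : ℝ) →
      ∀ m : ℕ, m ≤ 50 →
        -- L∞ bound (stated pointwise) for ∂_s^j (U₁ − U₂), j = 0, 1
        (∀ s : ℝ, ∀ ψ ≥ (0:ℝ),
          (∑ j ∈ Finset.range 2, (1+ψ)^m *
            |dS j (fun s' ψ' => Q₁ s' ψ' / (ω₁ ^ 2 * (q_e s') ^ 2 + Q₁ s' ψ')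
              - Q₂ s' ψ' / (ω₂ ^ 2 * (q_e s') ^ 2 + Q₂ s' ψ')) s ψ|)
            ≤ C * (Xnorm L 2 m (fun s' ψ' => Q₁ s' ψ' - Q₂ s' ψ')
                + ε ^ (1.99 : ℝ) * |ωbar₁ - ωbar₂|)) ∧
        -- L² bound for ∂_s^j (U₁ − U₂), j = 0, 1, 2
        ((∑ j ∈ Finset.range 3,
            Real.sqrt (L2sq L (wt m
              (dS j (fun s' ψ' => Q₁ s' ψ' / (ω₁ ^ 2 * (q_e s') ^ 2 + Q₁ s' ψ')
                - Q₂ s' ψ' / (ω₂ ^ 2 * (q_e s') ^ 2 + Q₂ s' ψ'))))))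
            ≤ C * (Xnorm L 2 m (fun s' ψ' => Q₁ s' ψ' - Q₂ s' ψ')
                + ε ^ (1.99 : ℝ) * |ωbar₁ - ωbar₂|)) := by
  obtain ⟨ε₀, hε₀, hε₀1, C, hC, hbound⟩ := U_difference_estimates_general (a := 1 / 2) (b := 2)
    (γ := 0.99) hL ((contDiff_infty.1 hqe 2)) hqeper (fun s => (hqepos s).ne') (by norm_num)
    (by norm_num)
  refine ⟨ε₀, hε₀, hε₀1, C, hC, ?_⟩
  intro ε hε hεlt ω₁ ω₂ ωbar₁ ωbar₂ hω₁l hω₁u hω₂l hω₂u hω₁ hω₂ _ _ Q₁ Q₂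
    hQ₁ hper₁ hfin₁ hX₁ hQ₂ hper₂ hfin₂ hX₂ m hm
  have hexp : (1.99 : ℝ) = 1 + 0.99 := by norm_num
  rw [hexp]
  exact hbound ε hε hεlt ω₁ ⟨hω₁l, hω₁u⟩ ω₂ ⟨hω₂l, hω₂u⟩ ωbar₁ ωbar₂ hω₁ hω₂ m
    Q₁ ⟨hQ₁, hper₁, hfin₁.mono_right hm⟩ Q₂ ⟨hQ₂, hper₂, hfin₂.mono_right hm⟩
    ((Xnorm_mono_right L 2 Q₁ hm).trans hX₁) ((Xnorm_mono_right L 2 Q₂ hm).trans hX₂)
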